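/- Let N = (S, A, T) be a P/T Petri net. A place relation R ⊆ S × S is a place bisimulation if and only if the following two conditions hold: (1) for all t1 ∈ T and for all markings m such that (pre(t1), m) ∈ R⊕, there exists t2 ∈ T such that pre(t2) = m, ℓ(t1) = ℓ(t2) and (post(t1), post(t2)) ∈ R⊕; and (2) for all t2 ∈ T and for all markings m such that (m, pre(t2)) ∈ R⊕, there exists t1 ∈ T such that pre(t1) = m, ℓ(t1) = ℓ(t2) and (post(t1), post(t2)) ∈ R⊕. -/

import Mathlib

/-- A transition of a P/T net: a triple (pre-set, label, post-set). -/
structure PNTrans (S A : Type) where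
  pre : Multiset S
  label : A
  post : Multiset S
deriving DecidableEq

/-- A P/T Petri net over places `S` and labels `A`: a finite set of transitions,
each with a nonempty pre-set. -/
structure PetriNet (S A : Type) [DecidableEq S] [DecidableEq A] where
  T : Finset (PNTrans S A)
  pre_ne : ∀ t ∈ T, t.pre ≠ 0

/-- The additive closure `R⊕` of a place relation `R`: the least relation on markings
containing `(θ, θ)` and closed under adding `R`-related places on both sides. -/
inductive AddClosure {S : Type} (R : S → S → Prop) : Multiset S → Multiset S → Prop
  | zero : AddClosure R 0 0
  | cons {s1 s2 : S} {m1 m2 : Multiset S} :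
      R s1 s2 → AddClosure R m1 m2 → AddClosure R (s1 ::ₘ m1) (s2 ::ₘ m2)

/-- `Fires N m t m'` : transition `t` of `N` is enabled at marking `m` and its firing
produces `m' = (m ⊖ pre(t)) ⊕ post(t)`. -/
def Fires {S A : Type} [DecidableEq S] [DecidableEq A]
    (N : PetriNet S A) (m : Multiset S) (t : PNTrans S A) (m' : Multiset S) : Prop :=
  t ∈ N.T ∧ t.pre ≤ m ∧ m' = m - t.pre + t.post

/-- A place bisimulation on `N`. -/
def IsPlaceBisim {S A : Type} [DecidableEq S] [DecidableEq A]
    (N : PetriNet S A) (R : S → S → Prop) : Prop :=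
  ∀ m1 m2, AddClosure R m1 m2 →
    (∀ t1 m1', Fires N m1 t1 m1' →
      ∃ t2 m2', Fires N m2 t2 m2' ∧ AddClosure R t1.pre t2.pre ∧
        t1.label = t2.label ∧ AddClosure R t1.post t2.post ∧ AddClosure R m1' m2') ∧
    (∀ t2 m2', Fires N m2 t2 m2' →
      ∃ t1 m1', Fires N m1 t1 m1' ∧ AddClosure R t1.pre t2.pre ∧
        t1.label = t2.label ∧ AddClosure R t1.post t2.post ∧ AddClosure R m1' m2')

/-- Place bisimilarity `m1 ~p m2`. -/
def PlaceBisimilar {S A : Type} [DecidableEq S] [DecidableEq A]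
    (N : PetriNet S A) (m1 m2 : Multiset S) : Prop :=
  ∃ R : S → S → Prop, IsPlaceBisim N R ∧ AddClosure R m1 m2

/-- An interleaving bisimulation on the markings of `N`. -/
def IsIntBisim {S A : Type} [DecidableEq S] [DecidableEq A]
    (N : PetriNet S A) (Q : Multiset S → Multiset S → Prop) : Prop :=
  ∀ m1 m2, Q m1 m2 →
    (∀ t1 m1', Fires N m1 t1 m1' →
      ∃ t2 m2', Fires N m2 t2 m2' ∧ t1.label = t2.label ∧ Q m1' m2') ∧
    (∀ t2 m2', Fires N m2 t2 m2' →
      ∃ t1 m1', Fires N m1 t1 m1' ∧ t1.label = t2.label ∧ Q m1' m2')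

/-- Interleaving bisimilarity `m1 ~int m2`. -/
def IntBisimilar {S A : Type} [DecidableEq S] [DecidableEq A]
    (N : PetriNet S A) (m1 m2 : Multiset S) : Prop :=
  ∃ Q, IsIntBisim N Q ∧ Q m1 m2

/-- First projection of a linking. -/
def lproj1 {S : Type} (l : Multiset (S × S)) : Multiset S := l.map Prod.fst

/-- Second projection of a linking. -/
def lproj2 {S : Type} (l : Multiset (S × S)) : Multiset S := l.map Prod.snd

/-- A structure-preserving bisimulation on `N`: a set of linkings. -/
def IsSpBisim {S A : Type} [DecidableEq S] [DecidableEq A]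
    (N : PetriNet S A) (R : Set (Multiset (S × S))) : Prop :=
  ∀ l ∈ R, ∀ c ≤ l,
    (∀ t1 ∈ N.T, t1.pre = lproj1 c →
      ∃ t2 ∈ N.T, t1.label = t2.label ∧ t2.pre = lproj2 c ∧
        ∃ cb : Multiset (S × S), t1.post = lproj1 cb ∧ t2.post = lproj2 cb ∧
          l - c + cb ∈ R) ∧
    (∀ t2 ∈ N.T, t2.pre = lproj2 c →
      ∃ t1 ∈ N.T, t1.label = t2.label ∧ t1.pre = lproj1 c ∧
        ∃ cb : Multiset (S × S), t1.post = lproj1 cb ∧ t2.post = lproj2 cb ∧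
          l - c + cb ∈ R)

/-- Structure-preserving bisimilarity `m1 ~sp m2`. -/
def SpBisimilar {S A : Type} [DecidableEq S] [DecidableEq A]
    (N : PetriNet S A) (m1 m2 : Multiset S) : Prop :=
  ∃ (R : Set (Multiset (S × S))) (l : Multiset (S × S)),
    IsSpBisim N R ∧ l ∈ R ∧ lproj1 l = m1 ∧ lproj2 l = m2

theorem addClosure_iff_rel {S : Type} (R : S → S → Prop) (m1 m2 : Multiset S) :
    AddClosure R m1 m2 ↔ Multiset.Rel R m1 m2 := by
  constructor
  · intro h
    induction h with
    | zero => exact Multiset.Rel.zero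
    | cons h _ ih => exact Multiset.Rel.cons h ih
  · intro h
    induction h with
    | zero => exact AddClosure.zero
    | cons h _ ih => exact AddClosure.cons h ih

/-- finite characterization of place bisimulations. -/
theorem placeBisim_iff {S A : Type} [Fintype S] [Fintype A]
    [DecidableEq S] [DecidableEq A] (N : PetriNet S A) (R : S → S → Prop) :
    IsPlaceBisim N R ↔
      ((∀ t1 ∈ N.T, ∀ m : Multiset S, AddClosure R t1.pre m →
        ∃ t2 ∈ N.T, t2.pre = m ∧ t1.label = t2.label ∧
          AddClosure R t1.post t2.post) ∧
       (∀ t2 ∈ N.T, ∀ m : Multiset S, AddClosure R m t2.pre →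
        ∃ t1 ∈ N.T, t1.pre = m ∧ t1.label = t2.label ∧
          AddClosure R t1.post t2.post)) := by
  unfold IsPlaceBisim Fires
  simp only [addClosure_iff_rel]
  constructor
  · intro H
    constructor
    · intro t1 ht1 m hm
      obtain ⟨t2, m2', ⟨ht2, hle, -⟩, hpre, hl, hpost, -⟩ :=
        (H t1.pre m hm).1 t1 _ ⟨ht1, le_rfl, rfl⟩
      refine ⟨t2, ht2, Multiset.eq_of_le_of_card_le hle ?_, hl, hpost⟩
      rw [← Multiset.card_eq_card_of_rel hm, ← Multiset.card_eq_card_of_rel hpre]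
    · intro t2 ht2 m hm
      obtain ⟨t1, m1', ⟨ht1, hle, -⟩, hpre, hl, hpost, -⟩ :=
        (H m t2.pre hm).2 t2 _ ⟨ht2, le_rfl, rfl⟩
      refine ⟨t1, ht1, Multiset.eq_of_le_of_card_le hle ?_, hl, hpost⟩
      rw [Multiset.card_eq_card_of_rel hm, Multiset.card_eq_card_of_rel hpre]
  · rintro ⟨H1, H2⟩ m1 m2 hm
    constructor
    · rintro t1 m1' ⟨ht1, hle, rfl⟩
      obtain ⟨r, rfl⟩ := Multiset.le_iff_exists_add.1 hle
      obtain ⟨p', r', hp, hr, rfl⟩ := Multiset.rel_add_left.1 hm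
      obtain ⟨t2, ht2, rfl, hl, hpost⟩ := H1 t1 ht1 p' hp
      refine ⟨t2, _, ⟨ht2, Multiset.le_add_right _ _, rfl⟩, hp, hl, hpost, ?_⟩
      rw [add_tsub_cancel_left, add_tsub_cancel_left]
      exact hr.add hpost
    · rintro t2 m2' ⟨ht2, hle, rfl⟩
      obtain ⟨r, rfl⟩ := Multiset.le_iff_exists_add.1 hle
      obtain ⟨p', r', hp, hr, rfl⟩ := Multiset.rel_add_right.1 hm
      obtain ⟨t1, ht1, rfl, hl, hpost⟩ := H2 t2 ht2 p' hp
      refine ⟨t1, _, ⟨ht1, Multiset.le_add_right _ _, rfl⟩, hp, hl, hpost, ?_⟩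
      rw [add_tsub_cancel_left, add_tsub_cancel_left]
      exact hr.add hpost
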